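/- Every prime graph with no induced odd hole and no induced bull is nearly perfect: for every vertex v, the subgraph induced on the anti-neighborhood A(v) is perfect. -/

import Mathlib

/-!
The proof is direct and does not pass through the Strong Perfect Graph Theorem.

If `A(v)` is not perfect, it contains a minimal imperfect set `H`: all cliques of `H` have at most
`k` vertices, `H` is not `k`-colorable, and proper subsets of `H` can be colored with their clique
number of colors. Such an `H` is connected (`MinImp.edge_across`) and has no nontrivial module.

The central claim (`MinImp.contact_complete`) is that a vertex `x` with a neighbor in `H` and a
neighbor `y` anticomplete to `H` is complete to `H`. Let `N` be the neighborhood of `x` in `H`, and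
suppose `N ≠ H`. By bull-freeness at `y - x`, the components of `G[N]` are modules of `H`, so `N`
is stable. Since there is no odd hole through `x`, odd induced paths between vertices of `N` do not
exist, and Kempe exchanges (`exists_mono_col`) make `N` monochromatic in colorings of proper subsets
of `H`. Let `R` be the set of vertices of `H \ N` with a neighbor in `N`. The components of `G[R]`
are homogeneous with respect to `H \ N`, and adjacent vertices of `R` have comparable neighborhoods
in `N`; a relative form of the module lemma (`MinImp.subsingleton_of_homogeneous`, a replication
argument) shows that `R` is stable too. Then Kempe exchanges make `R` monochromatic in a coloring of
`H \ N`, and giving `N` another color yields a `k`-coloring of `H`, a contradiction.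

Finally let `Z` be the set of outside vertices anticomplete to `H`, so `v ∈ Z`, and `W` the set of
vertices that are neither in `Z` nor adjacent to it. The union of the co-components of `G[W]` that
meet `H` contains `H` and misses `v`. Vertices of `Z` are anticomplete to it, the rest of `W` is
complete to it, and so are the remaining vertices, because they are complete to `H` and `G` has no
bull. Hence it is a nontrivial module.
-/


open SimpleGraph

/-- The dart: vertices a,b,c,d,e = 0,1,2,3,4; edges ab, ac, ad, bd, cd, de. -/
def dartGraph : SimpleGraph (Fin 5) :=
  SimpleGraph.fromEdgeSet {s(0,1), s(0,2), s(0,3), s(1,3), s(2,3), s(3,4)}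

/-- The bull: vertices a,b,c,d,e = 0,1,2,3,4; edges ab, bc, cd, be, ce. -/
def bullGraph : SimpleGraph (Fin 5) :=
  SimpleGraph.fromEdgeSet {s(0,1), s(1,2), s(2,3), s(1,4), s(2,4)}

/-- The house: C4 on v1..v4 = 0..3 plus v5 = 4 adjacent to v2 = 1 and v3 = 2. -/
def houseGraph : SimpleGraph (Fin 5) :=
  SimpleGraph.fromEdgeSet {s(0,1), s(1,2), s(2,3), s(3,0), s(4,1), s(4,2)}

/-- Anti-neighborhood of a vertex: all vertices distinct from and nonadjacent to `v`. -/
def vertexAnti {V : Type*} (G : SimpleGraph V) (v : V) : Set V :=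
  {u | u ≠ v ∧ ¬ G.Adj v u}

/-- Anti-neighborhood of a set `S`: vertices outside `S` with no neighbor in `S`. -/
def antiNbhd {V : Type*} (G : SimpleGraph V) (S : Set V) : Set V :=
  {v | v ∉ S ∧ ∀ u ∈ S, ¬ G.Adj v u}

/-- Contact vertices of `S`: outside `S`, with a neighbor in `S` and a neighbor in `antiNbhd G S`. -/
def contactSet {V : Type*} (G : SimpleGraph V) (S : Set V) : Set V :=
  {v | v ∉ S ∧ (∃ u ∈ S, G.Adj v u) ∧ ∃ w ∈ antiNbhd G S, G.Adj v w}

/-- `G` has a clique cutset: a clique whose removal disconnects the graph. -/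
def HasCliqueCutset {V : Type*} (G : SimpleGraph V) : Prop :=
  ∃ C : Set V, G.IsClique C ∧ ¬ (G.induce Cᶜ).Preconnected

/-- `U` is a module: no outside vertex distinguishes two vertices of `U`. -/
def IsModule {V : Type*} (G : SimpleGraph V) (U : Set V) : Prop :=
  ∀ z ∉ U, (∀ x ∈ U, G.Adj z x) ∨ (∀ x ∈ U, ¬ G.Adj z x)

/-- `G` is prime: all its modules are trivial. -/
def IsPrime {V : Type*} (G : SimpleGraph V) : Prop :=
  ∀ U : Set V, IsModule G U → U = ∅ ∨ (∃ x, U = {x}) ∨ U = Set.univ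

/-- `G` is perfect: every induced subgraph has chromatic number equal to clique number. -/
def IsPerfect {V : Type*} (G : SimpleGraph V) : Prop :=
  ∀ s : Set V, (G.induce s).chromaticNumber = ((G.induce s).cliqueNum : ℕ∞)

/-- Distance from a vertex to a set of vertices. -/
noncomputable def setDist {V : Type*} (G : SimpleGraph V) (v : V) (S : Set V) : ℕ :=
  sInf {n | ∃ u ∈ S, n = G.dist v u}

/-! ### Colorings and cliques on vertex sets -/

/-- `c` is a proper coloring of `G[s]` with colors `0, …, k - 1`; values outside `s` are
irrelevant. -/
def IsCol {V : Type*} (G : SimpleGraph V) (s : Set V) (k : ℕ) (c : V → ℕ) : Prop :=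
  (∀ u ∈ s, c u < k) ∧ ∀ u ∈ s, ∀ w ∈ s, G.Adj u w → c u ≠ c w

/-- Every clique of `G[s]` has at most `k` vertices. -/
def CliqueBound {V : Type*} (G : SimpleGraph V) (s : Set V) (k : ℕ) : Prop :=
  ∀ K : Finset V, (K : Set V) ⊆ s → G.IsClique (K : Set V) → K.card ≤ k

/-- `G[s]` can be colored with as many colors as its clique number, phrased without naming that
number: any bound on the cliques is a sufficient number of colors. -/
def Good {V : Type*} (G : SimpleGraph V) (s : Set V) : Prop :=
  ∀ k, CliqueBound G s k → ∃ c, IsCol G s k c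

/-- `H` is minimal imperfect, witnessed by `k`: cliques of `H` have at most `k` vertices, `H` is not
`k`-colorable, and each proper subset of `H` is `Good`. -/
structure MinImp {V : Type*} (G : SimpleGraph V) (H : Set V) (k : ℕ) : Prop where
  bound : CliqueBound G H k
  notCol : ∀ c, ¬ IsCol G H k c
  good : ∀ s, s ⊂ H → Good G s

lemma CliqueBound.mono {V : Type*} {G : SimpleGraph V} {s t : Set V} {k : ℕ}
    (h : CliqueBound G t k) (hst : s ⊆ t) : CliqueBound G s k :=
  fun K hK hc => h K (hK.trans hst) hc

lemma MinImp.col {V : Type*} {G : SimpleGraph V} {H : Set V} {k : ℕ} (h : MinImp G H k)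
    {s : Set V} (hs : s ⊂ H) : ∃ c, IsCol G s k c :=
  h.good s hs k (h.bound.mono hs.subset)

lemma MinImp.not_subsingleton {V : Type*} {G : SimpleGraph V} {H : Set V} {k : ℕ}
    (h : MinImp G H k) : ¬ H.Subsingleton := by
  intro hs
  apply h.notCol (fun _ => 0)
  refine ⟨fun u hu => ?_, fun u hu w hw ha => ?_⟩
  · have : _ ≤ k := h.bound {u} (by simpa using hu) (by simp)
    rw [Finset.card_singleton] at this
    exact this
  · exact absurd (hs hu hw) ha.ne

/-- A minimal imperfect set is connected: colorings of the two sides of an edgeless cut could be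
glued. -/
lemma MinImp.edge_across {V : Type*} {G : SimpleGraph V} {H : Set V} {k : ℕ}
    (h : MinImp G H k) {D : Set V} (hD : ∃ p ∈ H, p ∈ D) (hD' : ∃ q ∈ H, q ∉ D) :
    ∃ p ∈ H, ∃ q ∈ H, p ∈ D ∧ q ∉ D ∧ G.Adj p q := by
  classical
  by_contra hno
  push Not at hno
  obtain ⟨p, hp, hpD⟩ := hD
  obtain ⟨q, hq, hqD⟩ := hD'
  obtain ⟨c, hc1, hc2⟩ := h.col (s := {u | u ∈ H ∧ u ∈ D})
    ⟨fun u hu => hu.1, fun hs => hqD (hs hq).2⟩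
  obtain ⟨d, hd1, hd2⟩ := h.col (s := {u | u ∈ H ∧ u ∉ D})
    ⟨fun u hu => hu.1, fun hs => (hs hp).2 hpD⟩
  apply h.notCol (fun u => if u ∈ D then c u else d u)
  refine ⟨fun u hu => ?_, fun u hu w hw ha => ?_⟩
  · by_cases huD : u ∈ D
    · simpa [huD] using hc1 u ⟨hu, huD⟩
    · simpa [huD] using hd1 u ⟨hu, huD⟩
  · by_cases huD : u ∈ D <;> by_cases hwD : w ∈ D
    · simpa [huD, hwD] using hc2 u ⟨hu, huD⟩ w ⟨hw, hwD⟩ ha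
    · exact absurd ha (hno u hu w hw huD hwD)
    · exact absurd ha.symm (hno w hw u hu hwD huD)
    · simpa [huD, hwD] using hd2 u ⟨hu, huD⟩ w ⟨hw, hwD⟩ ha

/-! ### Induced paths, odd holes and Kempe chains -/

/-- `f 0, f 1, …, f n` is an induced path of length `n`. -/
def IsIndPath {V : Type*} (G : SimpleGraph V) (f : ℕ → V) (n : ℕ) : Prop :=
  ∀ i j, i < j → j ≤ n → f i ≠ f j ∧ (G.Adj (f i) (f j) ↔ j = i + 1)

/-- A vertex outside an induced path of odd length at least 3 that sees exactly the two ends closes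
an odd hole. -/
def OddClosureFree {V : Type*} (G : SimpleGraph V) : Prop :=
  ∀ (f : ℕ → V) (n : ℕ) (x : V), IsIndPath G f n → Odd n → 3 ≤ n → G.Adj x (f 0) →
    G.Adj x (f n) → (∀ i, 0 < i → i < n → ¬ G.Adj x (f i) ∧ x ≠ f i) → False

/-- The absence of bulls, spelled out: `a`, `d` are the pendant vertices at `b`, `c`, and `e` is the
third vertex of the triangle. -/
def BullFree {V : Type*} (G : SimpleGraph V) : Prop :=
  ∀ a b c d e : V, G.Adj a b → G.Adj b c → G.Adj c d → G.Adj b e → G.Adj c e →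
    ¬ G.Adj a c → ¬ G.Adj a d → ¬ G.Adj a e → ¬ G.Adj b d → ¬ G.Adj d e → False

lemma bullFree_of_isEmpty {V : Type*} {G : SimpleGraph V} (h : IsEmpty (bullGraph ↪g G)) :
    BullFree G := by
  intro a b c d e hab hbc hcd hbe hce hac had hae hbd hde
  have n1 := hab.ne
  have n2 := hbc.ne
  have n3 := hcd.ne
  have n4 := hbe.ne
  have n5 := hce.ne
  have n6 : a ≠ c := by rintro rfl; exact had hcd
  have n7 : a ≠ d := by rintro rfl; exact hbd hab.symm
  have n8 : a ≠ e := by rintro rfl; exact hac hce.symm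
  have n9 : b ≠ d := by rintro rfl; exact had hab
  have n10 : d ≠ e := by rintro rfl; exact hbd hbe
  refine h.elim ⟨⟨![a, b, c, d, e], ?_⟩, ?_⟩
  · rw [← List.nodup_ofFn]
    simp [*]
  · intro i j
    fin_cases i <;> fin_cases j <;>
      simp [bullGraph, G.adj_comm, *]

lemma oddClosureFree_of_isEmpty {V : Type*} {G : SimpleGraph V}
    (h : ∀ k : ℕ, 2 ≤ k → IsEmpty (cycleGraph (2 * k + 1) ↪g G)) : OddClosureFree G := by
  intro f n x hf hodd hn h0 hn' hx
  obtain ⟨m, rfl⟩ := hodd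
  let g : ℕ → V := fun i => Nat.casesOn i x f
  have hxne : ∀ i ≤ 2 * m + 1, x ≠ f i := by
    intro i hi
    rcases Nat.eq_zero_or_pos i with rfl | hi0
    · exact h0.ne
    · rcases hi.lt_or_eq with hlt | rfl
      · exact (hx i hi0 hlt).2
      · exact hn'.ne
  have hxadj : ∀ i ≤ 2 * m + 1, (G.Adj x (f i) ↔ i = 0 ∨ i = 2 * m + 1) := by
    intro i hi
    constructor
    · intro ha
      by_contra hne
      push Not at hne
      exact (hx i (by omega) (by omega)).1 ha
    · rintro (rfl | rfl) <;> assumption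
  have key : ∀ i j, i < j → j < 2 * (m + 1) + 1 →
      g i ≠ g j ∧ (G.Adj (g i) (g j) ↔ j = i + 1 ∨ (i = 0 ∧ j = 2 * (m + 1))) := by
    intro i j hij hj
    obtain ⟨j, rfl⟩ : ∃ j', j = j' + 1 := ⟨j - 1, by omega⟩
    cases i with
    | zero =>
      refine ⟨hxne j (by omega), (hxadj j (by omega)).trans ?_⟩
      omega
    | succ i =>
      obtain ⟨h1, h2⟩ := hf i j (by omega) (by omega)
      refine ⟨h1, h2.trans ?_⟩
      omega
  refine (h (m + 1) (by omega)).elim ⟨⟨fun i => g i.val, ?_⟩, ?_⟩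
  · intro i j hij
    by_contra hne
    rcases lt_or_gt_of_ne (fun h => hne (Fin.ext h)) with hlt | hlt
    · exact (key _ _ hlt j.2).1 hij
    · exact (key _ _ hlt i.2).1 hij.symm
  -- Adjacency in `cycleGraph` is modular; for `i < j` it reads `j = i + 1` or `(i, j) = (0, last)`.
  · have cyc : ∀ i j : Fin (2 * (m + 1) + 1), i.val < j.val →
        ((cycleGraph (2 * (m + 1) + 1)).Adj i j ↔
          (j.val = i.val + 1 ∨ (i.val = 0 ∧ j.val = 2 * (m + 1)))) := by
      intro i j hij
      rw [cycleGraph_adj', Fin.sub_def, Fin.sub_def]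
      have hi := i.2
      have hj := j.2
      have e1 : (2 * (m + 1) + 1 - j.val + i.val) % (2 * (m + 1) + 1)
          = 2 * (m + 1) + 1 - j.val + i.val := Nat.mod_eq_of_lt (by omega)
      have e2 : (2 * (m + 1) + 1 - i.val + j.val) % (2 * (m + 1) + 1) = j.val - i.val := by
        rw [show 2 * (m + 1) + 1 - i.val + j.val = (j.val - i.val) + (2 * (m + 1) + 1) by omega,
          Nat.add_mod_right]
        exact Nat.mod_eq_of_lt (by omega)
      simp only [e1, e2]
      omega
    intro i j
    show G.Adj (g i.val) (g j.val) ↔ _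
    rcases lt_trichotomy i.val j.val with hlt | heq | hlt
    · rw [(key _ _ hlt j.2).2, cyc i j hlt]
    · have : i = j := Fin.ext heq
      subst this
      simp
    · rw [G.adj_comm, (key _ _ hlt i.2).2, SimpleGraph.adj_comm, cyc j i hlt]

/-- Extend an induced path by one new vertex at each end. -/
lemma IsIndPath.extend {V : Type*} {G : SimpleGraph V} {f : ℕ → V} {n : ℕ} (hf : IsIndPath G f n)
    {p q : V} (hpq : ¬ G.Adj p q) (hne : p ≠ q)
    (hp : ∀ i ≤ n, p ≠ f i ∧ (G.Adj p (f i) ↔ i = 0))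
    (hq : ∀ i ≤ n, q ≠ f i ∧ (G.Adj q (f i) ↔ i = n)) :
    ∃ g : ℕ → V, IsIndPath G g (n + 2) ∧ g 0 = p ∧ g (n + 2) = q ∧
      ∀ i, 0 < i → i < n + 2 → ∃ j ≤ n, g i = f j := by
  refine ⟨fun i => if i = 0 then p else if i = n + 2 then q else f (i - 1), ?_, by simp,
    by simp, ?_⟩
  · intro i j hij hj
    have hj0 : j ≠ 0 := by omega
    have hin : i ≠ n + 2 := by omega
    by_cases hi : i = 0 <;> by_cases hjn : j = n + 2
    · subst hi hjn
      simp [hne, hpq]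
    · subst hi
      obtain ⟨h1, h2⟩ := hp (j - 1) (by omega)
      simp only [hj0, hjn, if_true, if_false]
      exact ⟨h1, h2.trans (by omega)⟩
    · subst hjn
      obtain ⟨h1, h2⟩ := hq (i - 1) (by omega)
      simp only [hi, hin, hj0, if_true, if_false]
      exact ⟨h1.symm, (G.adj_comm _ _).trans (h2.trans (by omega))⟩
    · obtain ⟨h1, h2⟩ := hf (i - 1) (j - 1) (by omega) (by omega)
      simp only [hi, hin, hj0, hjn, if_false]
      exact ⟨h1, h2.trans (by omega)⟩
  · intro i hi0 hin
    exact ⟨i - 1, by omega, by simp [Nat.pos_iff_ne_zero.mp hi0, hin.ne]⟩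

/-- A Kempe chain of `c` inside `s`, of length `n`, between two vertices of `T` of different
colors. -/
def IsKempeChain {V : Type*} (G : SimpleGraph V) (s T : Set V) (c : V → ℕ) (f : ℕ → V) (n : ℕ) :
    Prop :=
  f 0 ∈ T ∧ f n ∈ T ∧ c (f 0) ≠ c (f n) ∧
    (∀ i ≤ n, f i ∈ s ∧ (c (f i) = c (f 0) ∨ c (f i) = c (f n))) ∧
    ∀ i < n, G.Adj (f i) (f (i + 1))

/-- A shortest Kempe chain is an induced path of odd length with interior outside `T`. -/
lemma exists_indPath_of_chain {V : Type*} {G : SimpleGraph V} {s T : Set V} {k : ℕ} {c : V → ℕ}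
    (hc : IsCol G s k c) (h : ∃ n f, IsKempeChain G s T c f n) :
    ∃ f n, IsIndPath G f n ∧ Odd n ∧ (∀ i ≤ n, f i ∈ s) ∧ f 0 ∈ T ∧ f n ∈ T ∧
      ∀ i, 0 < i → i < n → f i ∉ T := by
  classical
  have hmin : ∀ m < Nat.find h, ∀ f, ¬ IsKempeChain G s T c f m :=
    fun m hm f hf => Nat.find_min h hm ⟨f, hf⟩
  obtain ⟨f, hf⟩ := Nat.find_spec h
  set n := Nat.find h with hn
  obtain ⟨hf0, hfn, hcn, hin, hadj⟩ := hf
  have hstep : ∀ i < n, c (f i) ≠ c (f (i + 1)) := fun i hi =>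
    hc.2 _ (hin i (by omega)).1 _ (hin (i + 1) (by omega)).1 (hadj i hi)
  have hpar : ∀ i ≤ n, (Even i → c (f i) = c (f 0)) ∧ (¬ Even i → c (f i) = c (f n)) := by
    intro i
    induction i with
    | zero => intro _; simp
    | succ i ih =>
      intro hi
      have h1 := ih (by omega)
      have h2 := hstep i (by omega)
      have h3 := (hin (i + 1) hi).2
      rw [Nat.even_add_one]
      constructor
      · intro he
        have := h1.2 he
        rcases h3 with h3 | h3
        · exact h3
        · exact absurd (this.trans h3.symm) h2
      · intro he
        have := h1.1 (not_not.mp he)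
        rcases h3 with h3 | h3
        · exact absurd (this.trans h3.symm) h2
        · exact h3
  -- No shortcut: `f i` is neither equal nor adjacent to a later vertex `f (i + d + 1)`, `d > 0`.
  have hshort : ∀ i d, 0 < d → i + d + 1 ≤ n → ¬ G.Adj (f i) (f (i + d + 1)) := by
    intro i d hd hle ha
    apply hmin (n - d) (by omega) (fun t => if t ≤ i then f t else f (t + d))
    have e : ¬ (n - d ≤ i) := by omega
    have e' : n - d + d = n := by omega
    refine ⟨by simpa using hf0, by simpa [e, e'] using hfn, by simpa [e, e'] using hcn, ?_, ?_⟩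
    · intro t ht
      simp only [Nat.zero_le, if_true, e, if_false, e']
      split_ifs with hti
      · exact hin t (by omega)
      · exact hin (t + d) (by omega)
    · intro t ht
      rcases lt_trichotomy t i with hti | rfl | hti
      · simpa [hti.le, Nat.succ_le_of_lt hti] using hadj t (by omega)
      · simpa [show t + 1 + d = t + d + 1 by omega] using ha
      · have := hadj (t + d) (by omega)
        simpa [show ¬ t ≤ i by omega, show ¬ t + 1 ≤ i by omega,
          show t + 1 + d = t + d + 1 by omega] using this
  have hodd : Odd n := by
    rw [← Nat.not_even_iff_odd]
    intro he
    exact hcn ((hpar n le_rfl).1 he).symm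
  have hne : ∀ i j, i < j → j ≤ n → f i ≠ f j := by
    intro i j hij hj heq
    rcases hj.lt_or_eq with hlt | rfl
    · have ha := hadj j hlt
      rw [← heq] at ha
      exact hshort i (j - i) (by omega) (by omega) (by
        rwa [show i + (j - i) + 1 = j + 1 by omega])
    · rcases Nat.eq_zero_or_pos i with rfl | hi0
      · exact hcn (by rw [heq])
      · have ha := hadj (i - 1) (by omega)
        rw [show i - 1 + 1 = i by omega, heq] at ha
        exact hshort (i - 1) (n - i) (by omega) (by omega) (by
          rwa [show i - 1 + (n - i) + 1 = n by omega])
  refine ⟨f, n, ?_, hodd, fun i hi => (hin i hi).1, hf0, hfn, ?_⟩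
  · intro i j hij hj
    refine ⟨hne i j hij hj, ?_, ?_⟩
    · intro ha
      by_contra hji
      exact hshort i (j - i - 1) (by omega) (by omega) (by
        rwa [show i + (j - i - 1) + 1 = j by omega])
    · rintro rfl
      exact hadj i (by omega)
  · intro i hi0 hi hT
    have hci := (hin i hi.le).2
    by_cases hc0 : c (f i) = c (f 0)
    · -- The tail from `f i` would be a shorter chain.
      apply hmin (n - i) (by omega) (fun t => f (t + i))
      have e : n - i + i = n := by omega
      refine ⟨by simpa using hT, by simpa [e] using hfn, by simpa [e, hc0] using hcn, ?_, ?_⟩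
      · intro t ht
        simpa [e, hc0] using hin (t + i) (by omega)
      · intro t ht
        simpa [show t + 1 + i = t + i + 1 by omega] using hadj (t + i) (by omega)
    · have hcn' : c (f i) = c (f n) := hci.resolve_left hc0
      apply hmin i hi f
      refine ⟨hf0, hT, fun h => hc0 h.symm, ?_, fun t ht => hadj t (by omega)⟩
      intro t ht
      simpa [hcn'] using hin t (by omega)

/-- If no two vertices of `T` are joined by an induced path of odd length with interior outside `T`,
then Kempe exchanges turn any coloring into one that is constant on `T`. -/
lemma exists_mono_col {V : Type*} [Finite V] {G : SimpleGraph V} {s T : Set V} {k : ℕ}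
    (hT : T ⊆ s)
    (hno : ∀ f n, IsIndPath G f n → Odd n → (∀ i ≤ n, f i ∈ s) → f 0 ∈ T → f n ∈ T →
      (∀ i, 0 < i → i < n → f i ∉ T) → False)
    (hcol : ∃ c, IsCol G s k c) : ∃ c a, IsCol G s k c ∧ ∀ p ∈ T, c p = a := by
  classical
  rcases T.eq_empty_or_nonempty with rfl | ⟨t0, ht0⟩
  · obtain ⟨c, hc⟩ := hcol
    exact ⟨c, 0, hc, by simp⟩
  -- Maximize the number of vertices of `T` that share the color of `t0`.
  obtain ⟨m, ⟨c, hc, hcm⟩, hmax⟩ : ∃ m, (∃ c, IsCol G s k c ∧ {t ∈ T | c t = c t0}.ncard = m) ∧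
      ∀ c, IsCol G s k c → {t ∈ T | c t = c t0}.ncard ≤ m := by
    let P : ℕ → Prop := fun m => ∃ c, IsCol G s k c ∧ {t ∈ T | c t = c t0}.ncard = m
    have hb : ∀ m, P m → m ≤ Nat.card V := by
      rintro m ⟨c, -, rfl⟩
      exact Set.ncard_le_card _
    obtain ⟨c, hc⟩ := hcol
    have hP : P _ := ⟨c, hc, rfl⟩
    exact ⟨Nat.findGreatest P (Nat.card V), Nat.findGreatest_spec (hb _ hP) hP,
      fun d hd => Nat.le_findGreatest (hb _ ⟨d, hd, rfl⟩) ⟨d, hd, rfl⟩⟩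
  refine ⟨c, c t0, hc, fun t ht => ?_⟩
  by_contra hne
  let r : V → V → Prop := fun u w => G.Adj u w ∧ w ∈ s ∧ (c w = c t ∨ c w = c t0)
  let B : Set V := {u | Relation.ReflTransGen r t u}
  have hBs : ∀ u ∈ B, u ∈ s ∧ (c u = c t ∨ c u = c t0) := by
    intro u hu
    induction hu with
    | refl => exact ⟨hT ht, Or.inl rfl⟩
    | tail _ h _ => exact h.2
  have hBT : ∀ u ∈ B, u ∈ T → c u ≠ c t0 := by
    intro u hu huT hcu
    have hpath : ∃ n, ∃ f : ℕ → V, f 0 = t ∧ f n = u ∧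
        (∀ i ≤ n, f i ∈ s ∧ (c (f i) = c t ∨ c (f i) = c t0)) ∧
        ∀ i < n, G.Adj (f i) (f (i + 1)) := by
      clear huT hcu
      induction hu with
      | refl => exact ⟨0, fun _ => t, rfl, rfl, fun _ _ => ⟨hT ht, Or.inl rfl⟩, by simp⟩
      | @tail b w _ h ih =>
        obtain ⟨n, f, h0, hn, h1, h2⟩ := ih
        refine ⟨n + 1, fun i => if i ≤ n then f i else w, by simpa using h0, by simp, ?_, ?_⟩
        · intro i hi
          by_cases hin : i ≤ n
          · simpa [hin] using h1 i hin
          · simpa [hin] using h.2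
        · intro i hi
          rcases (Nat.lt_succ_iff.mp hi).lt_or_eq with hin | rfl
          · simpa [hin.le, Nat.succ_le_of_lt hin] using h2 i hin
          · simpa [hn] using h.1
    obtain ⟨n, f, h0, hn, h1, h2⟩ := hpath
    obtain ⟨g, m', hg, hodd, hgs, hg0, hgm, hgi⟩ := exists_indPath_of_chain (T := T) hc
      ⟨n, f, h0 ▸ ht, hn ▸ huT, by rw [h0, hn, hcu]; exact hne,
        by rw [h0, hn, hcu]; exact h1, h2⟩
    exact hno g m' hg hodd hgs hg0 hgm hgi
  let d : V → ℕ := fun u => if u ∈ B then (if c u = c t then c t0 else c t) else c u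
  have hd : IsCol G s k d := by
    have hcross : ∀ u ∈ B, ∀ w ∈ s, w ∉ B → G.Adj u w → c w ≠ c t ∧ c w ≠ c t0 := by
      intro u hu w hw hwB ha
      by_contra hcon
      exact hwB (Relation.ReflTransGen.tail hu ⟨ha, hw, by tauto⟩)
    refine ⟨fun u hu => ?_, fun u hu w hw ha => ?_⟩
    · have h1 := hc.1 u hu
      have h2 := hc.1 t (hT ht)
      have h3 := hc.1 t0 (hT ht0)
      simp only [d]
      split_ifs <;> assumption
    · have h1 := hc.2 u hu w hw ha
      by_cases huB : u ∈ B <;> by_cases hwB : w ∈ B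
      · have h2 := (hBs u huB).2
        have h3 := (hBs w hwB).2
        simp only [d, huB, hwB, if_true]
        split_ifs <;> grind
      · have h2 := hcross u huB w hw hwB ha
        simp only [d, huB, hwB, if_true, if_false]
        split_ifs <;> grind
      · have h2 := hcross w hwB u hu huB ha.symm
        simp only [d, huB, hwB, if_true, if_false]
        split_ifs <;> grind
      · simpa [d, huB, hwB] using h1
  have ht0B : t0 ∉ B := fun h => hBT t0 h ht0 rfl
  have htB : t ∈ B := Relation.ReflTransGen.refl
  have hdt0 : d t0 = c t0 := by simp [d, ht0B]
  have hdt : d t = c t0 := by simp [d, htB]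
  have hlt : {u ∈ T | c u = c t0}.ncard < {u ∈ T | d u = d t0}.ncard := by
    apply Set.ncard_lt_ncard _ (Set.toFinite _)
    refine ⟨?_, fun hsub => hne (hsub (show t ∈ {u ∈ T | d u = d t0} from
      ⟨ht, hdt.trans hdt0.symm⟩)).2⟩
    rintro u ⟨hu, hcu⟩
    have huB : u ∉ B := fun h => hBT u h hu hcu
    exact ⟨hu, by rw [hdt0]; simpa [d, huB] using hcu⟩
  have := hmax d hd
  omega

/-! ### Relative modules of minimal imperfect sets -/

/-- A minimal imperfect set has no nontrivial module, in a version relative to a set `N` that can be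
made monochromatic: `Q` need only be homogeneous with respect to the vertices outside `N`, if each
vertex of `Q` has a neighbor in `N` and adjacent vertices of `Q` have comparable neighborhoods in
`N`. The case `N = ∅` is the absolute statement. -/
lemma MinImp.subsingleton_of_homogeneous {V : Type*} [Finite V] {G : SimpleGraph V} {H : Set V}
    {k : ℕ} (h : MinImp G H k) {N Q : Set V} (hNH : N ⊆ H) (hQH : Q ⊆ H)
    (hQN : ∀ q ∈ Q, q ∉ N) (hQne : Q ≠ H)
    (hmono : ∀ s, s ⊂ H → N ⊆ s → ∃ c a, IsCol G s k c ∧ ∀ p ∈ N, c p = a)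
    (hcomp : ∀ q ∈ Q, ∀ s ∈ Q, G.Adj q s →
      (∀ p ∈ N, G.Adj p q → G.Adj p s) ∨ (∀ p ∈ N, G.Adj p s → G.Adj p q))
    (hcov : N.Nonempty → ∀ q ∈ Q, ∃ p ∈ N, G.Adj p q)
    (hhom : ∀ r ∈ H, r ∉ N → r ∉ Q → ∀ q ∈ Q, ∀ s ∈ Q, G.Adj r q → G.Adj r s) :
    Q.Subsingleton := by
  classical
  -- Otherwise shrink `Q` to a maximum clique and color the rest of `Q` with the colors of it.
  have hclique : G.IsClique Q := by
    obtain ⟨K, ⟨hKQ, hK⟩, hKmax⟩ : ∃ K : Finset V, ((K : Set V) ⊆ Q ∧ G.IsClique (K : Set V)) ∧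
        ∀ L : Finset V, (L : Set V) ⊆ Q ∧ G.IsClique (L : Set V) → L.card ≤ K.card := by
      have := Fintype.ofFinite V
      obtain ⟨K, hK, hmax⟩ := Finset.exists_max_image
        (Finset.univ.filter fun K : Finset V => (K : Set V) ⊆ Q ∧ G.IsClique (K : Set V))
        Finset.card ⟨∅, by simp⟩
      simp only [Finset.mem_filter, Finset.mem_univ, true_and] at hK hmax
      exact ⟨K, hK, hmax⟩
    by_contra hnc
    have hKne : ∃ q ∈ Q, q ∉ K := by
      by_contra hcon
      push Not at hcon
      exact hnc (hK.subset hcon)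
    obtain ⟨q0, hq0, hq0K⟩ := hKne
    obtain ⟨c, a, hc, hca⟩ := hmono {u | u ∈ H ∧ (u ∈ Q → u ∈ K)}
      ⟨fun u hu => hu.1, fun hs => hq0K ((hs (hQH hq0)).2 hq0)⟩
      (fun p hp => ⟨hNH hp, fun hpQ => absurd hp (hQN p hpQ)⟩)
    obtain ⟨d, hd⟩ := h.good Q (hQH.ssubset_of_ne hQne) K.card
      (fun L hL hLc => hKmax L ⟨hL, hLc⟩)
    have hKs : ∀ u ∈ K, u ∈ {u | u ∈ H ∧ (u ∈ Q → u ∈ K)} :=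
      fun u hu => ⟨hQH (hKQ hu), fun _ => hu⟩
    let e := K.equivFin.symm
    let g : ℕ → ℕ := fun i => if hi : i < K.card then c (e ⟨i, hi⟩) else 0
    have hg : ∀ q ∈ Q, ∃ u ∈ K, g (d q) = c u := by
      intro q hq
      have := hd.1 q hq
      exact ⟨e ⟨d q, this⟩, (e ⟨d q, this⟩).2, by simp [g, this]⟩
    have hginj : ∀ i < K.card, ∀ j < K.card, i ≠ j → g i ≠ g j := by
      intro i hi j hj hij
      simp only [g, hi, hj, dif_pos]
      have hne : e ⟨i, hi⟩ ≠ e ⟨j, hj⟩ := fun he => hij (by simpa using e.injective he)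
      exact hc.2 _ (hKs _ (e ⟨i, hi⟩).2) _ (hKs _ (e ⟨j, hj⟩).2)
        (hK (e ⟨i, hi⟩).2 (e ⟨j, hj⟩).2 (fun h => hne (Subtype.ext h)))
    have hcross : ∀ q ∈ Q, ∀ w ∈ H, w ∉ Q → G.Adj w q → g (d q) ≠ c w := by
      intro q hq w hw hwQ ha
      obtain ⟨u, hu, hgu⟩ := hg q hq
      rw [hgu]
      by_cases hwN : w ∈ N
      · obtain ⟨p, hp, hpu⟩ := hcov ⟨w, hwN⟩ u (hKQ hu)
        rw [hca w hwN, ← hca p hp]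
        exact hc.2 _ (hKs u hu) _ ⟨hNH hp, fun hpQ => absurd hp (hQN p hpQ)⟩ hpu.symm
      · exact hc.2 _ (hKs u hu) _ ⟨hw, fun h => absurd h hwQ⟩
          (hhom w hw hwN hwQ q hq u (hKQ hu) ha).symm
    apply h.notCol (fun u => if u ∈ Q then g (d u) else c u)
    refine ⟨fun u hu => ?_, fun u hu w hw ha => ?_⟩
    · by_cases huQ : u ∈ Q
      · obtain ⟨u', hu', hgu⟩ := hg u huQ
        simp only [huQ, if_true, hgu]
        exact hc.1 u' (hKs u' hu')
      · simp only [huQ, if_false]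
        exact hc.1 u ⟨hu, fun h => absurd h huQ⟩
    · by_cases huQ : u ∈ Q <;> by_cases hwQ : w ∈ Q <;> simp only [huQ, hwQ, if_true, if_false]
      · exact hginj _ (hd.1 u huQ) _ (hd.1 w hwQ) (hd.2 u huQ w hwQ ha)
      · exact hcross u huQ w hw hwQ ha.symm
      · exact (hcross w hwQ u hu huQ ha).symm
      · exact hc.2 u ⟨hu, fun h => absurd h huQ⟩ w ⟨hw, fun h => absurd h hwQ⟩ ha
  -- Replication: `s` dominates `q`, so removing the rest of the color class of `q` from `H - s`
  -- lowers the clique number, and `s` can take the place of `q` in that class.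
  have main : ∀ q ∈ Q, ∀ s ∈ Q, q ≠ s → (∀ p ∈ N, G.Adj p q → G.Adj p s) → False := by
    intro q hq s hs hqs hdom
    obtain ⟨c, a, hc, hca⟩ := hmono {u | u ∈ H ∧ u ≠ s}
      ⟨fun u hu => hu.1, fun hsub => (hsub (hQH hs)).2 rfl⟩
      (fun p hp => ⟨hNH hp, by rintro rfl; exact hQN _ hs hp⟩)
    have hqm : q ∈ {u | u ∈ H ∧ u ≠ s} := ⟨hQH hq, hqs⟩
    have hk : c q < k := hc.1 q hqm
    have hF : CliqueBound G {u | (u ∈ H ∧ u ≠ s) ∧ (u = q ∨ c u ≠ c q)} (k - 1) := by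
      intro K hK hKc
      by_cases hqK : q ∈ K
      · have hsK : s ∉ K := fun h => (hK h).1.2 rfl
        have := h.bound (insert s K) (by
          intro u hu
          rcases Finset.mem_insert.mp hu with rfl | hu
          · exact hQH hs
          · exact (hK hu).1.1) (by
          rw [Finset.coe_insert]
          refine hKc.insert (fun u hu _ => ?_)
          by_cases huq : u = q
          · rw [huq]
            exact hclique hs hq hqs.symm
          · have ha : G.Adj u q := hKc hu hqK huq
            by_cases huN : u ∈ N
            · exact (hdom u huN ha).symm
            · by_cases huQ : u ∈ Q
              · exact hclique hs huQ (hK hu).1.2.symm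
              · exact (hhom u (hK hu).1.1 huN huQ q hq s hs ha).symm)
        rw [Finset.card_insert_of_notMem hsK] at this
        omega
      · have hinj : Set.InjOn c (K : Set V) := by
          intro u hu w hw hcuw
          by_contra hne
          exact hc.2 u (hK hu).1 w (hK hw).1 (hKc hu hw hne) hcuw
        rw [← Finset.card_image_of_injOn hinj]
        have hsub : K.image c ⊆ (Finset.range k).erase (c q) := by
          intro i hi
          obtain ⟨u, hu, rfl⟩ := Finset.mem_image.mp hi
          have h1 := hK hu
          refine Finset.mem_erase.mpr ⟨?_, Finset.mem_range.mpr (hc.1 u h1.1)⟩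
          rcases h1.2 with rfl | h2
          · exact absurd hu hqK
          · exact h2
        refine (Finset.card_le_card hsub).trans ?_
        rw [Finset.card_erase_of_mem (Finset.mem_range.mpr hk), Finset.card_range]
    obtain ⟨d, hd⟩ := h.good _
      ⟨fun u hu => hu.1.1, fun hsub => (hsub (hQH hs)).1.2 rfl⟩ _ hF
    have hsS : ∀ u ∈ H, u ≠ s → u ≠ q → c u = c q → ¬ G.Adj s u := by
      intro u hu hus huq hcu ha
      have hnadj : ¬ G.Adj u q := fun h => hc.2 u ⟨hu, hus⟩ q hqm h hcu
      by_cases huN : u ∈ N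
      · obtain ⟨p, hp, hpq⟩ := hcov ⟨u, huN⟩ q hq
        refine hc.2 p ⟨hNH hp, ?_⟩ q hqm hpq ?_
        · rintro rfl
          exact hQN _ hs hp
        · rw [hca p hp, ← hca u huN, hcu]
      · by_cases huQ : u ∈ Q
        · exact hnadj (hclique huQ hq huq)
        · exact hnadj (hhom u hu huN huQ s hs q hq ha.symm)
    apply h.notCol (fun u => if u ≠ s ∧ (u = q ∨ c u ≠ c q) then d u else k - 1)
    refine ⟨fun u hu => ?_, fun u hu w hw ha => ?_⟩
    · dsimp only
      split_ifs with hif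
      · have := hd.1 u ⟨⟨hu, hif.1⟩, hif.2⟩
        omega
      · omega
    · dsimp only
      split_ifs with h1 h2 h2
      · exact hd.2 u ⟨⟨hu, h1.1⟩, h1.2⟩ w ⟨⟨hw, h2.1⟩, h2.2⟩ ha
      · have := hd.1 u ⟨⟨hu, h1.1⟩, h1.2⟩
        omega
      · have := hd.1 w ⟨⟨hw, h2.1⟩, h2.2⟩
        omega
      · exfalso
        by_cases hus : u = s
        · subst hus
          have hwu : w ≠ u := ha.ne'
          exact hsS w hw hwu (by tauto) (by tauto) ha
        · by_cases hws : w = s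
          · subst hws
            exact hsS u hu hus (by tauto) (by tauto) ha.symm
          · exact hc.2 u ⟨hu, hus⟩ w ⟨hw, hws⟩ ha (by
              rw [show c u = c q by tauto, show c w = c q by tauto])
  intro q hq s hs
  by_contra hqs
  rcases hcomp q hq s hs (hclique hq hs hqs) with h1 | h1
  · exact main q hq s hs hqs h1
  · exact main s hs q hq (Ne.symm hqs) h1

lemma MinImp.subsingleton_of_module {V : Type*} [Finite V] {G : SimpleGraph V} {H : Set V}
    {k : ℕ} (h : MinImp G H k) {Q : Set V} (hQH : Q ⊆ H) (hQne : Q ≠ H)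
    (hhom : ∀ r ∈ H, r ∉ Q → ∀ q ∈ Q, ∀ s ∈ Q, G.Adj r q → G.Adj r s) : Q.Subsingleton :=
  h.subsingleton_of_homogeneous (N := ∅) (by simp) hQH (by simp) hQne
    (fun s hs _ => by
      obtain ⟨c, hc⟩ := h.col hs
      exact ⟨c, 0, hc, by simp⟩)
    (by simp) (by simp) (fun r hr _ => hhom r hr)

/-- The connected component of `q` in `G[R]`, for `q ∈ R`. -/
def comp {V : Type*} (G : SimpleGraph V) (R : Set V) (q : V) : Set V :=
  {u | Relation.ReflTransGen (fun a b => G.Adj a b ∧ a ∈ R ∧ b ∈ R) q u}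

lemma comp_subset {V : Type*} {G : SimpleGraph V} {R : Set V} {q : V} (hq : q ∈ R) :
    comp G R q ⊆ R := by
  intro u hu
  induction hu with
  | refl => exact hq
  | tail _ h _ => exact h.2.2

lemma comp_closed {V : Type*} {G : SimpleGraph V} {R : Set V} {q u w : V} (hq : q ∈ R)
    (hu : u ∈ comp G R q) (hw : w ∈ R) (ha : G.Adj u w) : w ∈ comp G R q :=
  Relation.ReflTransGen.tail hu ⟨ha, comp_subset hq hu, hw⟩

/-- A vertex that does not distinguish the ends of any edge of `G[R]` does not distinguish two
vertices of a component. -/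
lemma comp_hom {V : Type*} {G : SimpleGraph V} {R : Set V} {q r : V}
    (h : ∀ a ∈ R, ∀ b ∈ R, G.Adj a b → G.Adj r a → G.Adj r b) :
    ∀ u ∈ comp G R q, ∀ w ∈ comp G R q, G.Adj r u → G.Adj r w := by
  have key : ∀ u ∈ comp G R q, (G.Adj r q ↔ G.Adj r u) := by
    intro u hu
    induction hu with
    | refl => rfl
    | tail _ hab ih =>
      exact ih.trans ⟨h _ hab.2.1 _ hab.2.2 hab.1, h _ hab.2.2 _ hab.2.1 hab.1.symm⟩
  exact fun u hu w hw hru => (key w hw).1 ((key u hu).2 hru)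

/-! ### Vertices attached to a minimal imperfect set -/

/-- No vertex outside a minimal imperfect set `H` has a nonempty stable neighborhood in `H`. -/
lemma MinImp.not_stable_attachment {V : Type*} [Finite V] {G : SimpleGraph V} {H : Set V} {k : ℕ}
    (h : MinImp G H k) (hb : BullFree G) (ho : OddClosureFree G) {x : V} (hx : x ∉ H)
    (hne : ∃ p ∈ H, G.Adj x p)
    (hst : ∀ p ∈ H, ∀ q ∈ H, G.Adj x p → G.Adj x q → ¬ G.Adj p q) : False := by
  classical
  let N : Set V := {p | p ∈ H ∧ G.Adj x p}
  let R : Set V := {q | (q ∈ H ∧ ¬ G.Adj x q) ∧ ∃ p ∈ N, G.Adj p q}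
  have hNst : ∀ p ∈ N, ∀ q ∈ N, ¬ G.Adj p q := fun p hp q hq => hst p hp.1 q hq.1 hp.2 hq.2
  have hmono : ∀ s, s ⊂ H → N ⊆ s → ∃ c a, IsCol G s k c ∧ ∀ p ∈ N, c p = a := by
    intro s hs hNs
    refine exists_mono_col hNs ?_ (h.col hs)
    intro f n hf hodd hfs hf0 hfn hfi
    have hn1 : n ≠ 1 := by
      rintro rfl
      exact hNst _ hf0 _ hfn ((hf 0 1 (by omega) le_rfl).2.2 rfl)
    refine ho f n x hf hodd ?_ hf0.2 hfn.2 ?_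
    · obtain ⟨m, rfl⟩ := hodd
      omega
    · intro i hi0 hi
      have hfH := hs.subset (hfs i hi.le)
      exact ⟨fun ha => hfi i hi0 hi ⟨hfH, ha⟩, fun he => hx (he ▸ hfH)⟩
  -- An edge of `R` with incomparable neighborhoods in `N` closes a 5-hole through `x`.
  have hcomp : ∀ q ∈ R, ∀ s ∈ R, G.Adj q s →
      (∀ p ∈ N, G.Adj p q → G.Adj p s) ∨ (∀ p ∈ N, G.Adj p s → G.Adj p q) := by
    intro q hq s hs hqs
    by_contra hcon
    push Not at hcon
    obtain ⟨⟨p, hp, hpq, hps⟩, ⟨p', hp', hps', hpq'⟩⟩ := hcon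
    have hpp : p ≠ p' := by rintro rfl; exact hps hps'
    have hpne : p ≠ s := by rintro rfl; exact hs.1.2 hp.2
    have hpne' : p' ≠ q := by rintro rfl; exact hq.1.2 hp'.2
    have hind : IsIndPath G (fun i => if i = 0 then q else s) 1 := by
      intro i j hij hj
      obtain ⟨rfl, rfl⟩ : i = 0 ∧ j = 1 := by omega
      simp [hqs, hqs.ne]
    obtain ⟨g, hg, hg0, hg3, hgi⟩ := hind.extend (hNst p hp p' hp') hpp (by
        intro i hi
        obtain rfl | rfl : i = 0 ∨ i = 1 := by omega
        · simp [hpq, hpq.ne]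
        · simp [hps, hpne]) (by
        intro i hi
        obtain rfl | rfl : i = 0 ∨ i = 1 := by omega
        · simp [hpq', hpne']
        · simp [hps', hps'.ne])
    refine ho g 3 x hg (by decide) le_rfl (hg0 ▸ hp.2) ((show g 3 = p' from hg3) ▸ hp'.2) ?_
    intro i hi0 hi
    obtain ⟨j, -, hj⟩ := hgi i hi0 hi
    rw [hj]
    split_ifs
    · exact ⟨hq.1.2, fun he => hx (he ▸ hq.1.1)⟩
    · exact ⟨hs.1.2, fun he => hx (he ▸ hs.1.1)⟩
  have hcommon : ∀ q ∈ R, ∀ s ∈ R, G.Adj q s → ∃ p ∈ N, G.Adj p q ∧ G.Adj p s := by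
    intro q hq s hs hqs
    obtain ⟨p, hp, hpq⟩ := hq.2
    obtain ⟨p', hp', hps⟩ := hs.2
    rcases hcomp q hq s hs hqs with h1 | h1
    · exact ⟨p, hp, hpq, h1 p hp hpq⟩
    · exact ⟨p', hp', h1 p' hp' hps, hps⟩
  have hRst : ∀ q ∈ R, ∀ s ∈ R, ¬ G.Adj q s := by
    intro q hq s hs hqs
    have hsub : comp G R q ⊆ R := comp_subset hq
    have hss : (comp G R q).Subsingleton := by
      refine h.subsingleton_of_homogeneous (N := N) (fun p hp => hp.1) (fun u hu => (hsub hu).1.1)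
        (fun u hu huN => (hsub hu).1.2 huN.2) ?_ hmono
        (fun u hu w hw => hcomp u (hsub hu) w (hsub hw)) (fun _ u hu => (hsub hu).2) ?_
      · intro he
        obtain ⟨p, hp, hxp⟩ := hne
        rw [← he] at hp
        exact (hsub hp).1.2 hxp
      · intro r hr hrN hrQ u hu w hw hru
        have hrR : r ∉ R := fun hrR => hrQ (comp_closed hq hu hrR hru.symm)
        refine comp_hom (fun a ha b hb' hab hra => ?_) u hu w hw hru
        by_contra hrb
        obtain ⟨p, hp, hpa, hpb⟩ := hcommon a ha b hb' hab
        have hxr : ¬ G.Adj x r := fun hxr => hrN ⟨hr, hxr⟩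
        have hpr : ¬ G.Adj p r := fun hpr => hrR ⟨⟨hr, hxr⟩, p, hp, hpr⟩
        exact hb x p a r b hp.2 hpa hra.symm hpb hab ha.1.2 hxr hb'.1.2 hpr hrb
    have := hss (Relation.ReflTransGen.refl : q ∈ comp G R q)
      (comp_closed hq Relation.ReflTransGen.refl hs hqs)
    exact hqs.ne this
  -- Color `H \ N` with `R` monochromatic; then `N` can take any other color.
  obtain ⟨p0, hp0, hxp0⟩ := hne
  have hM : {u | u ∈ H ∧ ¬ G.Adj x u} ⊂ H :=
    ⟨fun u hu => hu.1, fun hs => (hs hp0).2 hxp0⟩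
  obtain ⟨c, a, hc, hca⟩ := exists_mono_col (T := R) (fun q hq => hq.1) (by
    intro f n hf hodd hfs hf0 hfn hfi
    have hn1 : n ≠ 1 := by
      rintro rfl
      exact hRst _ hf0 _ hfn ((hf 0 1 (by omega) le_rfl).2.2 rfl)
    have hn3 : 3 ≤ n := by
      obtain ⟨m, rfl⟩ := hodd
      omega
    have hNf : ∀ p ∈ N, ∀ i ≤ n, p ≠ f i := by
      rintro p hp i hi rfl
      exact (hfs i hi).2 hp.2
    have hNi : ∀ p ∈ N, ∀ i, 0 < i → i < n → ¬ G.Adj p (f i) := fun p hp i hi0 hi ha =>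
      hfi i hi0 hi ⟨hfs i hi.le, p, hp, ha⟩
    by_cases hcm : ∃ p ∈ N, G.Adj p (f 0) ∧ G.Adj p (f n)
    · obtain ⟨p, hp, h1, h2⟩ := hcm
      exact ho f n p hf hodd hn3 h1 h2
        (fun i hi0 hi => ⟨hNi p hp i hi0 hi, hNf p hp i hi.le⟩)
    · push Not at hcm
      obtain ⟨p, hp, hpf⟩ := hf0.2
      obtain ⟨p', hp', hpf'⟩ := hfn.2
      have hpn := hcm p hp hpf
      have hpn' : ¬ G.Adj p' (f 0) := fun h => hcm p' hp' h hpf'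
      obtain ⟨g, hg, hg0, hgn, hgi⟩ := hf.extend (hNst p hp p' hp')
        (by rintro rfl; exact hpn hpf') (by
          intro i hi
          refine ⟨hNf p hp i hi, fun ha => ?_, fun hi => hi ▸ hpf⟩
          by_contra hi0
          rcases hi.lt_or_eq with hlt | rfl
          · exact hNi p hp i (by omega) hlt ha
          · exact hpn ha) (by
          intro i hi
          refine ⟨hNf p' hp' i hi, fun ha => ?_, fun hi => hi ▸ hpf'⟩
          by_contra hin
          rcases Nat.eq_zero_or_pos i with rfl | hi0
          · exact hpn' ha
          · exact hNi p' hp' i hi0 (by omega) ha)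
      refine ho g (n + 2) x hg (hodd.add_even (by decide)) (by omega) (hg0 ▸ hp.2)
        (hgn ▸ hp'.2) ?_
      intro i hi0 hi
      obtain ⟨j, hj, hij⟩ := hgi i hi0 hi
      rw [hij]
      exact ⟨(hfs j hj).2, fun he => hx (he ▸ (hfs j hj).1)⟩) (h.col hM)
  -- A neighbor of `p0` exists, so `k ≥ 2` and a color different from `a` is available.
  have hk : 2 ≤ k := by
    obtain ⟨p, hp, q, hq, hpD, hqD, hpq⟩ := h.edge_across (D := {p0}) ⟨p0, hp0, rfl⟩ (by
      by_contra hcon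
      push Not at hcon
      exact h.not_subsingleton (fun u hu w hw => (hcon u hu).trans (hcon w hw).symm))
    have := h.bound {p, q} (by
      intro u hu
      rcases (by simpa using hu : u = p ∨ u = q) with rfl | rfl <;> assumption) (by
      simp [hpq])
    rwa [Finset.card_pair hpq.ne] at this
  obtain ⟨b, hbk, hba⟩ : ∃ b < k, b ≠ a := by
    by_cases ha0 : a = 0
    · exact ⟨1, by omega, by omega⟩
    · exact ⟨0, by omega, fun h => ha0 h.symm⟩
  have hbM : ∀ u ∈ H, ∀ w ∈ H, G.Adj x u → ¬ G.Adj x w → G.Adj u w → b ≠ c w := by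
    intro u hu w hw hxu hxw ha
    rw [hca w ⟨⟨hw, hxw⟩, u, ⟨hu, hxu⟩, ha⟩]
    exact hba
  apply h.notCol (fun u => if G.Adj x u then b else c u)
  refine ⟨fun u hu => ?_, fun u hu w hw ha => ?_⟩
  · by_cases hxu : G.Adj x u
    · simpa [hxu] using hbk
    · simpa [hxu] using hc.1 u ⟨hu, hxu⟩
  · by_cases hxu : G.Adj x u <;> by_cases hxw : G.Adj x w <;>
      simp only [hxu, hxw, if_true, if_false]
    · exact absurd ha (hst u hu w hw hxu hxw)
    · exact hbM u hu w hw hxu hxw ha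
    · exact (hbM w hw u hu hxw hxu ha.symm).symm
    · exact hc.2 u ⟨hu, hxu⟩ w ⟨hw, hxw⟩ ha

/-- A vertex with a neighbor in a minimal imperfect set `H` and a neighbor anticomplete to `H` is
complete to `H`. -/
lemma MinImp.contact_complete {V : Type*} [Finite V] {G : SimpleGraph V} {H : Set V} {k : ℕ}
    (h : MinImp G H k) (hb : BullFree G) (ho : OddClosureFree G) {x y : V}
    (hy : ∀ u ∈ H, ¬ G.Adj y u) (hyx : G.Adj y x) (hne : ∃ p ∈ H, G.Adj x p) :
    ∀ u ∈ H, G.Adj x u := by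
  by_contra hcon
  push Not at hcon
  obtain ⟨u0, hu0, hxu0⟩ := hcon
  have hxH : x ∉ H := fun hx => hy x hx hyx
  refine h.not_stable_attachment hb ho hxH hne ?_
  intro p hp q hq hxp hxq hpq
  let N : Set V := {p | p ∈ H ∧ G.Adj x p}
  have hpN : p ∈ N := ⟨hp, hxp⟩
  have hss : (comp G N p).Subsingleton := by
    refine h.subsingleton_of_module (fun u hu => (comp_subset hpN hu).1) ?_ ?_
    · intro he
      rw [← he] at hu0
      exact hxu0 (comp_subset hpN hu0).2
    · intro r hr hrQ u hu w hw hru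
      have hrN : ¬ G.Adj x r := fun hxr => hrQ (comp_closed hpN hu ⟨hr, hxr⟩ hru.symm)
      refine comp_hom (fun a ha b hb' hab hra => ?_) u hu w hw hru
      by_contra hrb
      exact hb y x a r b hyx ha.2 hra.symm hb'.2 hab (hy a ha.1) (hy r hr) (hy b hb'.1) hrN hrb
  exact hpq.ne (hss (Relation.ReflTransGen.refl : p ∈ comp G N p)
    (comp_closed hpN Relation.ReflTransGen.refl ⟨hq, hxq⟩ hpq))

/-- A minimal imperfect set with an anticomplete outside vertex lies in a nontrivial module. -/
lemma MinImp.not_isPrime {V : Type*} [Finite V] {G : SimpleGraph V} {H : Set V} {k : ℕ}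
    (h : MinImp G H k) (hb : BullFree G) (ho : OddClosureFree G) {v : V} (hvH : v ∉ H)
    (hv : ∀ u ∈ H, ¬ G.Adj v u) : ¬ IsPrime G := by
  intro hprime
  let Z : Set V := {z | z ∉ H ∧ ∀ u ∈ H, ¬ G.Adj z u}
  let W : Set V := {w | w ∉ Z ∧ ∀ z ∈ Z, ¬ G.Adj z w}
  have hHW : ∀ u ∈ H, u ∈ W := fun u hu => ⟨fun hz => hz.1 hu, fun z hz => hz.2 u hu⟩
  have hWn : ∀ w ∈ W, w ∉ H → ∃ p ∈ H, G.Adj w p := by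
    intro w hw hwH
    by_contra hcon
    push Not at hcon
    exact hw.1 ⟨hwH, hcon⟩
  -- The co-components of `W` that meet `H`.
  let U : Set V := {u | ∃ p ∈ H, Relation.ReflTransGen (fun a b => ¬ G.Adj a b ∧ b ∈ W) p u}
  have hHU : H ⊆ U := fun u hu => ⟨u, hu, Relation.ReflTransGen.refl⟩
  have hUW : ∀ u ∈ U, u ∈ W := by
    rintro u ⟨p, hp, hpu⟩
    induction hpu with
    | refl => exact hHW p hp
    | tail _ h _ => exact h.2
  have hcontact : ∀ c z, z ∈ Z → G.Adj z c → c ∉ Z → ∀ u ∈ U, G.Adj c u := by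
    rintro c z hz hzc hcZ u ⟨p, hp, hpu⟩
    have hcH : c ∉ H := fun hc => hz.2 c hc hzc
    have hcn : ∃ p ∈ H, G.Adj c p := by
      by_contra hcon
      push Not at hcon
      exact hcZ ⟨hcH, hcon⟩
    have hcc := h.contact_complete hb ho hz.2 hzc hcn
    have hmain : G.Adj c u ∧ u ∈ W := by
      induction hpu with
      | refl => exact ⟨hcc p hp, hHW p hp⟩
      | @tail b w _ hbw ih =>
        obtain ⟨hbw, hwW⟩ := hbw
        obtain ⟨hcb, hbW⟩ := ih
        refine ⟨?_, hwW⟩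
        by_contra hcw
        have hwH : w ∉ H := fun hw => hcw (hcc w hw)
        by_cases hwc : ∀ t ∈ H, G.Adj w t
        · have hbH : b ∉ H := fun hbH => hbw (hwc b hbH).symm
          obtain ⟨t, ht, hbt⟩ := hWn b hbW hbH
          exact hb z c t w b hzc (hcc t ht) (hwc t ht).symm hcb hbt.symm
            (hz.2 t ht) (hwW.2 z hz) (hbW.2 z hz) hcw (fun hh => hbw hh.symm)
        · push Not at hwc
          obtain ⟨s, hs, r, hr, hsD, hrD, hsr⟩ := h.edge_across (D := {t | G.Adj w t})
            (hWn w hwW hwH) hwc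
          exact hb z c s w r hzc (hcc s hs) (SimpleGraph.Adj.symm hsD) (hcc r hr) hsr
            (hz.2 s hs) (hwW.2 z hz) (hz.2 r hr) hcw hrD
    exact hmain.1
  have hmod : IsModule G U := by
    intro z hzU
    by_cases hzZ : z ∈ Z
    · exact Or.inr fun u hu => (hUW u hu).2 z hzZ
    · left
      by_cases hzW : z ∈ W
      · rintro u ⟨p, hp, hpu⟩
        by_contra hzu
        exact hzU ⟨p, hp, hpu.tail ⟨fun ha => hzu ha.symm, hzW⟩⟩
      · have : ∃ z' ∈ Z, G.Adj z' z := by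
          by_contra hcon
          push Not at hcon
          exact hzW ⟨hzZ, hcon⟩
        obtain ⟨z', hz', ha⟩ := this
        exact hcontact z z' hz' ha hzZ
  rcases hprime U hmod with he | ⟨t, he⟩ | he
  · exact h.not_subsingleton (by rw [he] at hHU; exact Set.subsingleton_empty.anti hHU)
  · exact h.not_subsingleton (by rw [he] at hHU; exact Set.subsingleton_singleton.anti hHU)
  · exact (hUW v (he ▸ Set.mem_univ v)).1 ⟨hvH, hv⟩

lemma exists_minImp {V : Type*} [Finite V] {G : SimpleGraph V} {s : Set V} (hs : ¬ Good G s) :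
    ∃ H k, H ⊆ s ∧ MinImp G H k := by
  obtain ⟨H, hHs, hmin⟩ := (Set.toFinite {t | ¬ Good G t}).exists_le_minimal hs
  have hH : ¬ Good G H := hmin.prop
  unfold Good at hH
  push Not at hH
  obtain ⟨k, hk, hc⟩ := hH
  refine ⟨H, k, hHs, hk, hc, fun t ht => ?_⟩
  by_contra hbad
  exact ht.2 (hmin.2 hbad ht.1)

/-- If all sets inside `A` are `Good`, then `G[A]` is perfect. -/
lemma isPerfect_of_good {V : Type*} [Finite V] {G : SimpleGraph V} {A : Set V}
    (h : ∀ s ⊆ A, Good G s) : IsPerfect (G.induce A) := by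
  classical
  have := Fintype.ofFinite V
  intro s
  set F := (G.induce A).induce s with hF
  let φ : s → V := fun u => u.1.1
  have hφ : Function.Injective φ := fun u w huw => Subtype.ext (Subtype.ext huw)
  apply le_antisymm
  · obtain ⟨c, hc⟩ := h (Set.range φ) (by rintro _ ⟨u, rfl⟩; exact u.1.2) F.cliqueNum (by
      intro K hK hKc
      have hcard : (K.preimage φ hφ.injOn).card = K.card := by
        rw [← Finset.card_image_of_injective _ hφ, Finset.image_preimage]
        congr 1
        ext u
        simp only [Finset.mem_filter, and_iff_left_iff_imp]
        exact fun hu => hK hu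
      rw [← hcard]
      apply SimpleGraph.IsClique.card_le_cliqueNum (G := F)
      intro u hu w hw huw
      exact hKc (by simpa using hu) (by simpa using hw) (fun he => huw (hφ he)))
    have : F.Colorable F.cliqueNum :=
      ⟨SimpleGraph.Coloring.mk (fun u => ⟨c (φ u), hc.1 _ ⟨u, rfl⟩⟩) (by
        intro u w ha he
        exact hc.2 _ ⟨u, rfl⟩ _ ⟨w, rfl⟩ ha (by simpa using he))⟩
    exact this.chromaticNumber_le
  · exact SimpleGraph.cliqueNum_le_chromaticNumber

theorem stmt10 {V : Type*} [Fintype V] (G : SimpleGraph V)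
    (hprime : IsPrime G)
    (hoddhole : ∀ k : ℕ, 2 ≤ k → IsEmpty (cycleGraph (2 * k + 1) ↪g G))
    (hbull : IsEmpty (bullGraph ↪g G))
    (v : V) :
    IsPerfect (G.induce (vertexAnti G v)) := by
  apply isPerfect_of_good
  intro s hs
  by_contra hbad
  obtain ⟨H, k, hHs, hH⟩ := exists_minImp hbad
  exact hH.not_isPrime (bullFree_of_isEmpty hbull) (oddClosureFree_of_isEmpty hoddhole)
    (v := v) (fun hv => (hs (hHs hv)).1 rfl) (fun u hu => (hs (hHs hu)).2) hprime
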